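/- Let n ≥ 2 be a natural number and let ℳ_n(z) ⊆ ℝ[z] be the span of the n polynomials z + (n−2)/n and (z+1)^k for k = 2, …, n. Define the second-order operator T f = P(z)f'' + (Q(z) + P'(z)/2)f' + R(z)f with P(z) = 4z², Q(z) = −4(2z² + (n+1)z − 4 + 2/(1+z)), and R(z) = 8n(1+z) − 4n/(1+z) (computed in the field of real rational functions). Then T maps ℳ_n(z) into ℳ_n(z); in particular, for every f ∈ ℳ_n(z), T f is a polynomial. -/

import Mathlib

open Polynomial

/-- The invariant module `ℳ_n(z) = span{z + (n−2)/n, (z+1)², …, (z+1)^n} ⊆ ℝ[z]`. -/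
noncomputable def morseModule (n : ℕ) : Submodule ℝ (Polynomial ℝ) :=
  Submodule.span ℝ
    {q | q = Polynomial.X + Polynomial.C (((n : ℝ) - 2) / (n : ℝ)) ∨
      ∃ k ∈ Finset.Icc 2 n, q = (Polynomial.X + 1) ^ k}

/-- The action of a triple `(a,b,c)` of real rational functions on a polynomial `f`:
`T f = a·f'' + b·f' + c·f`, computed in `ℝ(z)`. -/
noncomputable def ratTripleApply (a b c : RatFunc ℝ) (f : Polynomial ℝ) : RatFunc ℝ :=
  a * algebraMap (Polynomial ℝ) (RatFunc ℝ) (Polynomial.derivative (Polynomial.derivative f)) +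
    b * algebraMap (Polynomial ℝ) (RatFunc ℝ) (Polynomial.derivative f) +
    c * algebraMap (Polynomial ℝ) (RatFunc ℝ) f

/-- The rational function `P(z) = 4z²`. -/
noncomputable def morseP : RatFunc ℝ :=
  algebraMap (Polynomial ℝ) (RatFunc ℝ) (Polynomial.C 4 * Polynomial.X ^ 2)

/-- The rational function `Q(z) = −4(2z² + (n+1)z − 4 + 2/(1+z))`. -/
noncomputable def morseQ (n : ℕ) : RatFunc ℝ :=
  algebraMap ℝ (RatFunc ℝ) (-4) *
    (algebraMap (Polynomial ℝ) (RatFunc ℝ)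
        (Polynomial.C 2 * Polynomial.X ^ 2 + Polynomial.C ((n : ℝ) + 1) * Polynomial.X
          - Polynomial.C 4) +
      2 / (1 + algebraMap (Polynomial ℝ) (RatFunc ℝ) Polynomial.X))

/-- The rational function `R(z) = 8n(1+z) − 4n/(1+z)`. -/
noncomputable def morseR (n : ℕ) : RatFunc ℝ :=
  algebraMap ℝ (RatFunc ℝ) (8 * (n : ℝ)) *
      (1 + algebraMap (Polynomial ℝ) (RatFunc ℝ) Polynomial.X) -
    algebraMap ℝ (RatFunc ℝ) (4 * (n : ℝ)) /
      (1 + algebraMap (Polynomial ℝ) (RatFunc ℝ) Polynomial.X)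

/-!
In terms of `w = z + 1` the operator acts on powers by the four-term formula
`T wᵏ = 8(n-k) wᵏ⁺¹ + 4k(k+3-n) wᵏ + (4n(k-1) - 8k(k-2)) wᵏ⁻¹ + 4k(k-3) wᵏ⁻²`.
The first coefficient vanishes at `k = n`, so the degree never exceeds `n`, and the last one
vanishes at `k = 3`, so no multiple of `w` alone appears there. For `k = 2` the two lowest terms
combine to `4n (w - 2/n)`, and in `T (w - 2/n)` the poles of `T w` and `T 1` cancel; here
`w - 2/n = z + (n-2)/n` is the linear generator.
-/

section SecondOrderOperator

/-- The second-order operator `f ↦ a f'' + b f' + c f` of `ratTripleApply`, bundled as a linear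
map so that invariance can be checked on generators. -/
noncomputable def ratTripleLinearMap (a b c : RatFunc ℝ) : ℝ[X] →ₗ[ℝ] RatFunc ℝ where
  toFun := ratTripleApply a b c
  map_add' f g := by
    simp only [ratTripleApply, map_add]
    ring
  map_smul' r f := by
    simp only [ratTripleApply, derivative_smul, RingHom.id_apply]
    simp only [Algebra.smul_def, map_mul, ← IsScalarTower.algebraMap_apply ℝ ℝ[X] (RatFunc ℝ)]
    ring

theorem ratTripleLinearMap_pow_of_derivative_eq_one (a b c : RatFunc ℝ) {p : ℝ[X]}
    (hp : derivative p = 1) (k : ℕ) :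
    ratTripleLinearMap a b c (p ^ k) =
      a * (k * (k - 1)) * (algebraMap ℝ[X] (RatFunc ℝ) p) ^ (k - 2 : ℤ) +
        b * k * (algebraMap ℝ[X] (RatFunc ℝ) p) ^ (k - 1 : ℤ) +
        c * (algebraMap ℝ[X] (RatFunc ℝ) p) ^ (k : ℤ) := by
  change ratTripleApply a b c (p ^ k) = _
  match k with
  | 0 => simp [ratTripleApply]
  | 1 => simp [ratTripleApply, hp]
  | j + 2 =>
    have hj_one : ((j + 2 : ℕ) : ℤ) - 1 = (j + 1 : ℕ) := by push_cast; ring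
    have hj_two : ((j + 2 : ℕ) : ℤ) - 2 = j := by push_cast; ring
    rw [hj_one, hj_two]
    simp only [zpow_natCast, ratTripleApply, derivative_pow, hp, derivative_natCast_mul,
      add_tsub_cancel_right, Nat.add_one_sub_one, mul_one, map_mul, map_pow, map_natCast]
    push_cast
    ring

end SecondOrderOperator

section MorseOperator

/-- The operator `T f = P f'' + (Q + P'/2) f' + R f` as a linear map `ℝ[z] → ℝ(z)`. -/
noncomputable def morseOperator (n : ℕ) : ℝ[X] →ₗ[ℝ] RatFunc ℝ :=
  ratTripleLinearMap morseP
    (morseQ n + algebraMap ℝ[X] (RatFunc ℝ) (derivative (C 4 * X ^ 2)) / 2) (morseR n)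

/-- The rational function `w = z + 1`, in whose powers both the operator and the module have
their simplest form. -/
noncomputable def morseShift : RatFunc ℝ :=
  algebraMap ℝ[X] (RatFunc ℝ) (X + 1)

theorem morseShift_ne_zero : morseShift ≠ 0 :=
  RatFunc.algebraMap_ne_zero (X_add_C_ne_zero 1)

theorem morseP_eq_morseShift : morseP = 4 * (morseShift - 1) ^ 2 := by
  simp only [morseP, morseShift, map_mul, map_pow, map_add, map_one, map_ofNat]
  ring

theorem morseQ_add_eq_morseShift (n : ℕ) :
    morseQ n + algebraMap ℝ[X] (RatFunc ℝ) (derivative (C 4 * X ^ 2)) / 2 =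
      -8 * morseShift ^ 2 + (16 - 4 * n) * morseShift + (8 + 4 * n) - 8 / morseShift := by
  have hderiv : derivative (C 4 * X ^ 2 : ℝ[X]) = 8 * X := by
    rw [derivative_C_mul, derivative_X_sq, C_ofNat, C_ofNat]
    ring
  rw [hderiv]
  simp only [morseQ, morseShift, add_comm (1 : RatFunc ℝ), map_neg, map_sub, map_mul,
    map_pow, map_add, map_one, map_ofNat, map_natCast]
  ring

theorem morseR_eq_morseShift (n : ℕ) :
    morseR n = 8 * n * morseShift - 4 * n / morseShift := by
  simp only [morseR, morseShift, add_comm (1 : RatFunc ℝ), map_mul, map_add, map_one, map_ofNat,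
    map_natCast]

theorem morseOperator_X_add_one_pow (n k : ℕ) :
    morseOperator n ((X + 1) ^ k) =
      (8 * (n - k) : ℝ) • morseShift ^ (k + 1 : ℤ) +
        (4 * k * (k + 3 - n) : ℝ) • morseShift ^ (k : ℤ) +
        ((4 * n * (k - 1) - 8 * k * (k - 2) : ℝ) • morseShift ^ (k - 1 : ℤ) +
          (4 * k * (k - 3) : ℝ) • morseShift ^ (k - 2 : ℤ)) := by
  have hw := morseShift_ne_zero
  rw [morseOperator, ratTripleLinearMap_pow_of_derivative_eq_one _ _ _ (by simp), ← morseShift,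
    morseP_eq_morseShift, morseQ_add_eq_morseShift, morseR_eq_morseShift]
  simp only [Algebra.smul_def, map_mul, map_add, map_sub, map_natCast, map_ofNat, map_one,
    zpow_add₀ hw, zpow_sub₀ hw, zpow_ofNat]
  field_simp
  ring

end MorseOperator

section Invariance

/-- The module `ℳ_n(z)` viewed inside `ℝ(z)`. -/
noncomputable def morseRatModule (n : ℕ) : Submodule ℝ (RatFunc ℝ) :=
  (morseModule n).map (IsScalarTower.toAlgHom ℝ ℝ[X] (RatFunc ℝ)).toLinearMap

variable {n : ℕ}

theorem morseShift_zpow_mem {j : ℤ} (hj : 2 ≤ j) (hjn : j ≤ n) :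
    morseShift ^ j ∈ morseRatModule n := by
  lift j to ℕ using by lia
  refine ⟨(X + 1) ^ j, Submodule.subset_span (.inr ⟨j, Finset.mem_Icc.2 (by lia), rfl⟩), ?_⟩
  simp [morseShift]

-- The exponents `1` and `0` are kept so that `morseOperator_X_add_one_pow` applies to both terms.
theorem X_add_C_eq_X_add_one_sub (hn : n ≠ 0) :
    (X + C (((n : ℝ) - 2) / n) : ℝ[X]) = (X + 1) ^ 1 - (2 / n : ℝ) • (X + 1) ^ 0 := by
  have hconst : ((n : ℝ) - 2) / n = 1 - 2 / n := by field_simp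
  rw [hconst, C_sub, C_1, smul_eq_C_mul]
  ring

theorem morseShift_sub_mem (hn : n ≠ 0) :
    morseShift - (2 / n : ℝ) • 1 ∈ morseRatModule n := by
  refine ⟨X + C (((n : ℝ) - 2) / n), Submodule.subset_span (.inl rfl), ?_⟩
  rw [X_add_C_eq_X_add_one_sub hn, map_sub, map_smul]
  simp [morseShift]

theorem sub_smul_morseShift_zpow_mem {k : ℕ} (hk : 1 ≤ k) (hkn : k ≤ n) :
    (8 * (n - k) : ℝ) • morseShift ^ (k + 1 : ℤ) ∈ morseRatModule n := by
  rcases hkn.eq_or_lt with rfl | hlt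
  · simp
  · exact Submodule.smul_mem _ _ (morseShift_zpow_mem (by lia) (by lia))

theorem morseOperator_lower_terms_mem {k : ℕ} (hk : 2 ≤ k) (hkn : k ≤ n) :
    (4 * n * (k - 1) - 8 * k * (k - 2) : ℝ) • morseShift ^ (k - 1 : ℤ) +
      (4 * k * (k - 3) : ℝ) • morseShift ^ (k - 2 : ℤ) ∈ morseRatModule n := by
  obtain rfl | rfl | hk_four : k = 2 ∨ k = 3 ∨ 4 ≤ k := by lia
  · have hn : (n : ℝ) ≠ 0 := by positivity
    convert Submodule.smul_mem _ (4 * n : ℝ) (morseShift_sub_mem (n := n) (by lia)) using 1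
    have hconst : (4 * n : ℝ) * (2 / n) = 8 := by field_simp; norm_num
    rw [smul_sub, smul_smul, hconst]
    simp only [Nat.cast_ofNat, Int.reduceSub, zpow_one, zpow_zero]
    module
  · have hlast : (4 * (3 : ℕ) * ((3 : ℕ) - 3) : ℝ) = 0 := by norm_num
    rw [hlast, zero_smul, add_zero]
    exact Submodule.smul_mem _ _ (morseShift_zpow_mem (by lia) (by lia))
  · exact add_mem (Submodule.smul_mem _ _ (morseShift_zpow_mem (by lia) (by lia)))
      (Submodule.smul_mem _ _ (morseShift_zpow_mem (by lia) (by lia)))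

theorem morseOperator_X_add_one_pow_mem {k : ℕ} (hk : 2 ≤ k) (hkn : k ≤ n) :
    morseOperator n ((X + 1) ^ k) ∈ morseRatModule n := by
  rw [morseOperator_X_add_one_pow]
  exact add_mem
    (add_mem (sub_smul_morseShift_zpow_mem (by lia) hkn)
      (Submodule.smul_mem _ _ (morseShift_zpow_mem (by lia) (by lia))))
    (morseOperator_lower_terms_mem hk hkn)

theorem morseOperator_X_add_C (hn : n ≠ 0) :
    morseOperator n (X + C (((n : ℝ) - 2) / n)) =
      (8 * (n - 1) : ℝ) • morseShift ^ 2 - (4 * n : ℝ) • (morseShift - (2 / n : ℝ) • 1) := by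
  have hw := morseShift_ne_zero
  have hn' : (n : RatFunc ℝ) ≠ 0 := Nat.cast_ne_zero.2 hn
  rw [X_add_C_eq_X_add_one_sub hn, map_sub, map_smul, morseOperator_X_add_one_pow,
    morseOperator_X_add_one_pow]
  simp only [Algebra.smul_def, map_mul, map_add, map_sub, map_div₀, map_natCast, map_ofNat,
    map_one, map_zero, Nat.cast_zero, Nat.cast_one, zpow_add₀ hw, zpow_sub₀ hw, zpow_ofNat]
  field_simp
  ring

theorem morseOperator_X_add_C_mem (hn : n ≠ 0) :
    morseOperator n (X + C (((n : ℝ) - 2) / n)) ∈ morseRatModule n := by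
  rw [morseOperator_X_add_C hn]
  refine sub_mem ?_ (Submodule.smul_mem _ _ (morseShift_sub_mem hn))
  simpa using sub_smul_morseShift_zpow_mem le_rfl (Nat.one_le_iff_ne_zero.2 hn)

end Invariance

/-- For `n ≥ 2`, the second-order operator
`T f = P f'' + (Q + P'/2) f' + R f` with `P = 4z²`,
`Q = −4(2z² + (n+1)z − 4 + 2/(1+z))` and `R = 8n(1+z) − 4n/(1+z)` maps
`ℳ_n(z) = span{z + (n−2)/n, (z+1)², …, (z+1)^n}` into itself; in particular, for
every `f ∈ ℳ_n(z)`, `T f` is a polynomial. -/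
theorem morse_operator_preserves_module (n : ℕ) (hn : 2 ≤ n) :
    ∀ f ∈ morseModule n,
      ratTripleApply morseP
        (morseQ n +
          algebraMap (Polynomial ℝ) (RatFunc ℝ)
            (Polynomial.derivative (Polynomial.C 4 * Polynomial.X ^ 2)) / 2)
        (morseR n) f ∈
      (morseModule n).map
        (IsScalarTower.toAlgHom ℝ (Polynomial ℝ) (RatFunc ℝ)).toLinearMap := by
  have hle : morseModule n ≤ (morseRatModule n).comap (morseOperator n) := by
    refine Submodule.span_le.2 ?_
    rintro _ (rfl | ⟨k, hk, rfl⟩)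
    · exact morseOperator_X_add_C_mem (by lia)
    · obtain ⟨hk_two, hk_le⟩ := Finset.mem_Icc.1 hk
      exact morseOperator_X_add_one_pow_mem hk_two hk_le
  exact fun f hf => hle hf
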